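/- Let p be a prime, r a positive integer, n = p^r, m a divisor of n−1, A the unique subgroup of order m of 𝔽_{p^r}ˣ, κ := (n−1)/m, x a generator of 𝔽_{p^r}ˣ, ω = e^{2πi/p}, Tr the field trace of 𝔽_{p^r} over 𝔽_p, and for z ∈ 𝔽_{p^r} set c_z := (1/m) Σ_{a ∈ A} ω^{Tr(z a)}. Let γ = e^{2πi/κ} and for d = 0, 1, ..., κ−1 define w_{d+1} := Σ_{t=0}^{κ−1} γ^{t d} c_{x^t}. Then w_1 = −1/m, and |w_{d+1}|² = (1/m)(κ + 1/m) for every d = 1, ..., κ−1. -/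

import Mathlib

/-!
The powers `x ^ t` with `t < κ` represent the cosets of `A`, so for a multiplicative character `χ`
that is trivial on `A`, summing `χ x ^ t * c_{x ^ t}` amounts to summing `χ u * ω ^ Tr u` over all
units `u`, up to the factor `1 / m`. The entry `w_{d + 1}` is therefore `1 / m` times the Gauss sum
of the character with `χ x = γ ^ d`. A Gauss sum is `-1` for `χ = 1` and has absolute value `√n`
otherwise, and `n = m κ + 1`.
-/

/-- The normalized character sum `c_z = (1/m) ∑_{a ∈ A} ω^{Tr(z·a)}` with `ω = e^{2πi/p}`,
for a subgroup `A` of order `m` of the group of units of the finite field `F` of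
characteristic `p`, `Tr` being the field trace to `𝔽_p`. -/
noncomputable def normCharSum (p : ℕ) (F : Type*) [Field F] [Algebra (ZMod p) F]
    (A : Subgroup Fˣ) [Fintype A] (m : ℕ) (z : F) : ℂ :=
  (1 / (m : ℂ)) * ∑ a : A, Complex.exp (2 * Real.pi * Complex.I / p) ^
      (Algebra.trace (ZMod p) F (z * ((a : Fˣ) : F))).val

section CyclicQuotient

variable {G : Type*} [Group G] {A : Subgroup G} [A.Normal] {x : G}

variable (A) in
lemma zpowers_mk_eq_top (hx : Subgroup.zpowers x = ⊤) :
    Subgroup.zpowers (x : G ⧸ A) = ⊤ := by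
  rw [← QuotientGroup.mk'_apply, ← MonoidHom.map_zpowers, hx,
    Subgroup.map_top_of_surjective _ (QuotientGroup.mk'_surjective A)]

lemma orderOf_mk_eq_index (hx : Subgroup.zpowers (x : G ⧸ A) = ⊤) :
    orderOf (x : G ⧸ A) = A.index :=
  orderOf_eq_card_of_zpowers_eq_top hx

lemma sum_range_index_sum_pow_mul [Fintype G] [Fintype A] {M : Type*} [AddCommMonoid M]
    (hx : Subgroup.zpowers (x : G ⧸ A) = ⊤) (f : G → M) :
    ∑ t ∈ Finset.range A.index, ∑ a : A, f (x ^ t * a) = ∑ g, f g := by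
  have hinj : Function.Injective fun q : Fin A.index × A => x ^ (q.1 : ℕ) * (q.2 : G) := by
    rintro ⟨s, a⟩ ⟨t, b⟩ h
    have hmk : (x : G ⧸ A) ^ (s : ℕ) = (x : G ⧸ A) ^ (t : ℕ) := by
      simpa [← QuotientGroup.mk_pow] using congrArg (QuotientGroup.mk (s := A)) h
    obtain rfl : s = t := Fin.ext <| pow_injOn_Iio_orderOf
      (by simp [orderOf_mk_eq_index hx]) (by simp [orderOf_mk_eq_index hx]) hmk
    simpa using h
  have hcard : Fintype.card (Fin A.index × A) = Fintype.card G := by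
    rw [Fintype.card_prod, Fintype.card_fin, ← Nat.card_eq_fintype_card,
      ← Nat.card_eq_fintype_card, A.index_mul_card]
  have hbij := (Fintype.bijective_iff_injective_and_card _).mpr ⟨hinj, hcard⟩
  rw [← hbij.sum_comp f, Fintype.sum_prod_type,
    ← Fin.sum_univ_eq_sum_range fun t => ∑ a : A, f (x ^ t * a)]

lemma exists_monoidHom_apply_eq_and_le_ker {H : Type*} [Group H]
    (hx : Subgroup.zpowers (x : G ⧸ A) = ⊤) {ζ : H} (hζ : ζ ^ A.index = 1) :
    ∃ f : G →* H, f x = ζ ∧ A ≤ f.ker := by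
  have hord : orderOf ζ ∣ orderOf (x : G ⧸ A) :=
    orderOf_mk_eq_index hx ▸ orderOf_dvd_of_pow_eq_one hζ
  have hgen := (Subgroup.eq_top_iff' _).mp hx
  refine ⟨(monoidHomOfForallMemZpowers hgen hord).comp (QuotientGroup.mk' A),
    monoidHomOfForallMemZpowers_apply_gen hgen hord, fun a ha => ?_⟩
  simp [MonoidHom.mem_ker, (QuotientGroup.eq_one_iff a).mpr ha]

end CyclicQuotient

section GaussSum

variable {R R' : Type*} [CommRing R] [Fintype R] [CommRing R']

lemma gaussSum_eq_sum_units [Fintype Rˣ] (χ : MulChar R R') (ψ : AddChar R R') :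
    gaussSum χ ψ = ∑ u : Rˣ, χ u * ψ u := by
  refine (Fintype.sum_of_injective Units.val Units.val_injective _ _ (fun a ha => ?_)
    fun _ => rfl).symm
  rw [χ.map_nonunit ha, zero_mul]

lemma sum_range_index_pow_mul_sum_eq_gaussSum {A : Subgroup Rˣ} [Fintype A] {x : Rˣ}
    (hx : Subgroup.zpowers (x : Rˣ ⧸ A) = ⊤) {χ : MulChar R R'} (hχ : ∀ a ∈ A, χ a = 1)
    (ψ : AddChar R R') :
    ∑ t ∈ Finset.range A.index, χ x ^ t * ∑ a : A, ψ (x ^ t * (a : Rˣ)) = gaussSum χ ψ := by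
  have := Fintype.ofFinite Rˣ
  rw [gaussSum_eq_sum_units, ← sum_range_index_sum_pow_mul hx]
  simp [hχ _ (Subtype.prop _), Finset.mul_sum]

lemma norm_sq_gaussSum {F : Type*} [Field F] [Fintype F] {χ : MulChar F ℂ} (hχ : χ ≠ 1)
    {ψ : AddChar F ℂ} (hψ : ψ ≠ 1) : ‖gaussSum χ ψ‖ ^ 2 = Fintype.card F := by
  have h := gaussSum_mul_gaussSum_eq_card hχ (AddChar.IsPrimitive.of_ne_one hψ)
  rw [← star_gaussSum_eq, ← starRingEnd_apply, Complex.mul_conj'] at h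
  exact_mod_cast h

end GaussSum

/-- The additive character `z ↦ ω ^ Tr z` of a `ℤ/n`-algebra, with `ω = e^{2πi/n}`, whose
values are the summands of `normCharSum`. It is obtained from Mathlib's `ZMod.stdAddChar`, which is
`j ↦ ω ^ j` on `ℤ/n`. -/
noncomputable def traceAddChar (n : ℕ) [NeZero n] (R : Type*) [CommRing R] [Algebra (ZMod n) R] :
    AddChar R ℂ :=
  ZMod.stdAddChar.compAddMonoidHom (Algebra.trace (ZMod n) R).toAddMonoidHom

lemma traceAddChar_apply (n : ℕ) [NeZero n] {R : Type*} [CommRing R] [Algebra (ZMod n) R]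
    (z : R) :
    traceAddChar n R z =
      Complex.exp (2 * Real.pi * Complex.I / n) ^ (Algebra.trace (ZMod n) R z).val := by
  change ZMod.stdAddChar (Algebra.trace (ZMod n) R z) = _
  rw [ZMod.stdAddChar_apply, ZMod.toCircle_apply, ← Complex.exp_nat_mul]
  ring_nf

lemma traceAddChar_ne_one (p : ℕ) [Fact p.Prime] (F : Type*) [Field F] [Finite F]
    [Algebra (ZMod p) F] : traceAddChar p F ≠ 1 := by
  obtain ⟨z, hz⟩ := Algebra.trace_surjective (ZMod p) F 1
  refine AddChar.ne_one_iff.mpr ⟨z, ?_⟩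
  change ZMod.stdAddChar (Algebra.trace (ZMod p) F z) ≠ 1
  rw [hz, ← AddChar.map_zero_eq_one (ZMod.stdAddChar (N := p))]
  exact ZMod.injective_stdAddChar.ne one_ne_zero

section NormCharSum

variable (p : ℕ) {F : Type*} [Field F] [Algebra (ZMod p) F]
  {A : Subgroup Fˣ} [Fintype A] (m : ℕ) {x : Fˣ}

lemma normCharSum_eq_sum_traceAddChar [NeZero p] (z : F) :
    normCharSum p F A m z = 1 / m * ∑ a : A, traceAddChar p F (z * (a : Fˣ)) := by
  simp only [normCharSum, traceAddChar_apply]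

lemma sum_pow_mul_normCharSum_eq_gaussSum [NeZero p] [Fintype F]
    (hx : Subgroup.zpowers (x : Fˣ ⧸ A) = ⊤) {χ : MulChar F ℂ} (hχ : ∀ a ∈ A, χ a = 1) :
    ∑ t ∈ Finset.range A.index, χ x ^ t * normCharSum p F A m ((x : F) ^ t) =
      1 / m * gaussSum χ (traceAddChar p F) := by
  simp only [← sum_range_index_pow_mul_sum_eq_gaussSum hx hχ, normCharSum_eq_sum_traceAddChar,
    Finset.mul_sum, mul_left_comm]

lemma sum_normCharSum_eq_neg_one_div [Fact p.Prime] [Finite F]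
    (hx : Subgroup.zpowers (x : Fˣ ⧸ A) = ⊤) :
    ∑ t ∈ Finset.range A.index, normCharSum p F A m ((x : F) ^ t) = -(1 / (m : ℂ)) := by
  have := Fintype.ofFinite F
  have h := sum_pow_mul_normCharSum_eq_gaussSum p m hx (χ := 1)
    fun a _ => MulChar.one_apply_coe a
  simpa [gaussSum_one_left (traceAddChar_ne_one p F)] using h

lemma norm_sq_sum_pow_mul_normCharSum [Fact p.Prime] [Fintype F]
    (hx : Subgroup.zpowers (x : Fˣ ⧸ A) = ⊤) {ζ : ℂˣ} (hζ : ζ ^ A.index = 1) (hζ_ne : ζ ≠ 1) :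
    ‖∑ t ∈ Finset.range A.index, (ζ : ℂ) ^ t * normCharSum p F A m ((x : F) ^ t)‖ ^ 2 =
      Fintype.card F / (m : ℝ) ^ 2 := by
  obtain ⟨f, rfl, hf⟩ := exists_monoidHom_apply_eq_and_le_ker hx hζ
  let χ := MulChar.ofUnitHom f
  have hχ_apply (u : Fˣ) : χ u = f u := MulChar.ofUnitHom_coe f u
  have hχ_mem : ∀ a ∈ A, χ a = 1 := fun a ha => by
    rw [hχ_apply, MonoidHom.mem_ker.mp (hf ha), Units.val_one]
  have hχ_ne : χ ≠ 1 := fun h => hζ_ne <| Units.ext <| by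
    rw [← hχ_apply, h, MulChar.one_apply_coe, Units.val_one]
  rw [← hχ_apply, sum_pow_mul_normCharSum_eq_gaussSum p m hx hχ_mem, norm_mul, mul_pow,
    norm_sq_gaussSum hχ_ne (traceAddChar_ne_one p F), norm_div, norm_one, Complex.norm_natCast]
  ring

end NormCharSum

/-- Lemma 10. With `x` a generator of `𝔽_{p^r}ˣ`, `A` the unique subgroup of order `m`,
`κ = (p^r - 1)/m`, `c_z = (1/m)∑_{a ∈ A} ω^{Tr(za)}`, `γ = e^{2πi/κ}`, and
`w_{d+1} = ∑_{t=0}^{κ-1} γ^{td} c_{x^t}`: one has `w₁ = -1/m` and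
`|w_{d+1}|² = (1/m)(κ + 1/m)` for `d = 1, …, κ-1`. -/
theorem dft_of_normalized_char_sums (p r : ℕ) [Fact p.Prime] (hr : 0 < r)
    (F : Type*) [Field F] [Fintype F] [Algebra (ZMod p) F]
    (hF : Fintype.card F = p ^ r)
    (m κ : ℕ) (hκ : m * κ = p ^ r - 1)
    (A : Subgroup Fˣ) [Fintype A] (hA : Nat.card A = m)
    (x : Fˣ) (hx : Subgroup.zpowers x = ⊤) :
    (∑ t ∈ Finset.range κ, normCharSum p F A m (((x : F)) ^ t) = -(1 / (m : ℂ))) ∧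
    (∀ d : ℕ, 1 ≤ d → d ≤ κ - 1 →
      ‖∑ t ∈ Finset.range κ,
          Complex.exp (2 * Real.pi * Complex.I / κ) ^ (t * d) *
            normCharSum p F A m (((x : F)) ^ t)‖ ^ 2
        = (1 / (m : ℝ)) * ((κ : ℝ) + 1 / (m : ℝ))) := by
  have hm : m ≠ 0 := hA ▸ Nat.card_pos.ne'
  have hx_mk := zpowers_mk_eq_top A hx
  have h_index : A.index = κ := by
    refine mul_left_cancel₀ hm ?_
    rw [hκ, ← hF, ← hA, A.card_mul_index, Nat.card_units, Nat.card_eq_fintype_card]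
  have h_card : Fintype.card F = m * κ + 1 := by
    have := Fintype.card_pos (α := F)
    lia
  subst h_index
  refine ⟨sum_normCharSum_eq_neg_one_div p m hx_mk, fun d hd_pos hd_le => ?_⟩
  have hγ := Complex.isPrimitiveRoot_exp A.index A.index_ne_zero_of_finite
  obtain ⟨γ, hγ_val⟩ := hγ.isUnit A.index_ne_zero_of_finite
  rw [← hγ_val] at hγ ⊢
  rw [IsPrimitiveRoot.coe_units_iff] at hγ
  have h_norm := norm_sq_sum_pow_mul_normCharSum p m hx_mk (ζ := γ ^ d)
    (by rw [pow_right_comm, hγ.pow_eq_one, one_pow])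
    (hγ.pow_ne_one_of_pos_of_lt (by lia) (by lia))
  simp only [Units.val_pow_eq_pow_val, ← pow_mul, mul_comm d] at h_norm
  rw [h_norm, h_card]
  push_cast
  field_simp
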